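/- Set ⟨z, z̄⟩ = z₁·conj(z₂) + z₂·conj(z₁) and K(z,z) = z₁² + m z₂² with m ∈ ℂ (m may be zero). Let F : ℂ³ → ℝ (coordinates (z₁, z₂, ζ)) be the real polynomial F = ⟨z, z̄⟩ + F₃ + F₄, where F₃ = 2Re( K(z,z)·conj(ζ) + A₁(z)·|ζ|² + A₂·ζ²·conj(ζ) ) and F₄ = 2Re( (P(z,z,z̄) + Q(z,z,z))·conj(ζ) + R(z,z)·conj(ζ)² ) + S(z,z̄)·|ζ|² + T(z,z,z̄,z̄) + 2Re( B₁(z,z)·|ζ|² + B₂(z)·ζ²·conj(ζ) + B₃(z)·ζ·conj(ζ)² ), with A₁, B₂, B₃ complex linear forms in z, A₂ ∈ ℂ, P a form of bidegree (2,1) in (z, z̄), Q and B₁ complex forms in z of degrees 3 and 2, R a complex quadratic form in z, S a real form of bidegree (1,1), and T a real form of bidegree (2,2). Let H(p) be the 3×3 complex Hessian matrix (∂²F/∂ξ_i ∂conj(ξ_j))(p), ξ = (z₁,z₂,ζ), taken with Wirtinger derivatives. If every homogeneous Taylor component of det H at 0 of degree ≤ 2 vanishes, then A₁ = 0, A₂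 = 0, B₁ = 0, B₂ = 0, B₃ = 0, and S(z,z̄) = 4( conj(m)·z₁·conj(z₂) + m·z₂·conj(z₁) ). -/

import Mathlib

open Complex ComplexConjugate Filter Topology

/-- The polarization `𝔽(ξ, η)` of the real polynomial
`F = ⟨z,z̄⟩ + F₃ + F₄` of Lemma 8 (null-pair case: Hermitian form `z₁ z̄₂ + z₂ z̄₁`,
`K = z₁² + m z₂²` with `m ∈ ℂ`), so that `F p = 𝔽 (p, conj p)`.  Here `ξ = (z₁, z₂, ζ)`
and `η` stands for `(z̄₁, z̄₂, ζ̄)`; `𝔽` is holomorphic (polynomial) in each argument. -/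
noncomputable def Fc (m : ℂ) (A1 : Fin 2 → ℂ) (A2 : ℂ)
    (P Q : Fin 2 → Fin 2 → Fin 2 → ℂ) (R : Fin 2 → Fin 2 → ℂ)
    (S : Matrix (Fin 2) (Fin 2) ℂ) (T : Fin 2 → Fin 2 → Fin 2 → Fin 2 → ℂ)
    (B1 : Fin 2 → Fin 2 → ℂ) (B2 B3 : Fin 2 → ℂ)
    (ξ η : Fin 3 → ℂ) : ℂ :=
  -- ⟨z, z̄⟩ = z₁ z̄₂ + z₂ z̄₁
  ξ 0 * η 1 + ξ 1 * η 0
  -- 2 Re (K(z,z) ζ̄)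
  + ((ξ 0 ^ 2 + m * ξ 1 ^ 2) * η 2
      + (η 0 ^ 2 + conj m * η 1 ^ 2) * ξ 2)
  -- 2 Re (A₁(z) |ζ|²)
  + ((∑ i, A1 i * ξ i.castSucc) * ξ 2 * η 2
      + (∑ i, conj (A1 i) * η i.castSucc) * η 2 * ξ 2)
  -- 2 Re (A₂ ζ² ζ̄)
  + (A2 * ξ 2 ^ 2 * η 2 + conj A2 * η 2 ^ 2 * ξ 2)
  -- 2 Re (P(z,z,z̄) ζ̄)
  + ((∑ i, ∑ j, ∑ l, P i j l * ξ i.castSucc * ξ j.castSucc * η l.castSucc) * η 2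
      + (∑ i, ∑ j, ∑ l, conj (P i j l) * η i.castSucc * η j.castSucc * ξ l.castSucc) * ξ 2)
  -- 2 Re (Q(z,z,z) ζ̄)
  + ((∑ i, ∑ j, ∑ l, Q i j l * ξ i.castSucc * ξ j.castSucc * ξ l.castSucc) * η 2
      + (∑ i, ∑ j, ∑ l, conj (Q i j l) * η i.castSucc * η j.castSucc * η l.castSucc) * ξ 2)
  -- 2 Re (R(z,z) ζ̄²)
  + ((∑ i, ∑ j, R i j * ξ i.castSucc * ξ j.castSucc) * η 2 ^ 2
      + (∑ i, ∑ j, conj (R i j) * η i.castSucc * η j.castSucc) * ξ 2 ^ 2)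
  -- S(z,z̄) |ζ|²
  + (∑ i, ∑ j, S i j * ξ i.castSucc * η j.castSucc) * ξ 2 * η 2
  -- T(z,z,z̄,z̄)
  + (∑ i, ∑ j, ∑ l, ∑ o, T i j l o * ξ i.castSucc * ξ j.castSucc * η l.castSucc * η o.castSucc)
  -- 2 Re (B₁(z,z) |ζ|²)
  + ((∑ i, ∑ j, B1 i j * ξ i.castSucc * ξ j.castSucc) * ξ 2 * η 2
      + (∑ i, ∑ j, conj (B1 i j) * η i.castSucc * η j.castSucc) * η 2 * ξ 2)
  -- 2 Re (B₂(z) ζ² ζ̄)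
  + ((∑ i, B2 i * ξ i.castSucc) * ξ 2 ^ 2 * η 2
      + (∑ i, conj (B2 i) * η i.castSucc) * η 2 ^ 2 * ξ 2)
  -- 2 Re (B₃(z) ζ ζ̄²)
  + ((∑ i, B3 i * ξ i.castSucc) * ξ 2 * η 2 ^ 2
      + (∑ i, conj (B3 i) * η i.castSucc) * η 2 * ξ 2 ^ 2)

/-- The complex (Wirtinger) Hessian `(∂²F/∂ξᵢ∂ξ̄ⱼ)(p)` of the real function
`F p = 𝔽 (p, conj p)`, computed through the polarization `𝔽`. -/
noncomputable def wirtHess (𝔽 : (Fin 3 → ℂ) → (Fin 3 → ℂ) → ℂ) (p : Fin 3 → ℂ) :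
    Matrix (Fin 3) (Fin 3) ℂ :=
  Matrix.of fun i j =>
    deriv (fun t : ℂ =>
      deriv (fun s : ℂ =>
          𝔽 (Function.update p i t) (Function.update (fun l => conj (p l)) j s))
        (conj (p j))) (p i)


section Helpers

variable (m : ℂ) (A1 : Fin 2 → ℂ) (A2 : ℂ)
    (P Q : Fin 2 → Fin 2 → Fin 2 → ℂ) (R : Fin 2 → Fin 2 → ℂ)
    (S : Matrix (Fin 2) (Fin 2) ℂ) (T : Fin 2 → Fin 2 → Fin 2 → Fin 2 → ℂ)
    (B1 : Fin 2 → Fin 2 → ℂ) (B2 B3 : Fin 2 → ℂ)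

/-- Derivative of the polarization in the variable `η_j`, `j = 0, 1`. -/
noncomputable def Dz (j : Fin 2) (ξ η : Fin 3 → ℂ) : ℂ :=
  ξ (![1, 0] j) + 2 * conj (![1, m] j) * η j.castSucc * ξ 2 + conj (A1 j) * η 2 * ξ 2
  + (∑ i, ∑ k, P i k j * ξ i.castSucc * ξ k.castSucc) * η 2
  + (∑ k, ∑ l, conj (P j k l + P k j l) * η k.castSucc * ξ l.castSucc) * ξ 2
  + (∑ k, ∑ l, conj (Q j k l + Q k j l + Q k l j) * η k.castSucc * η l.castSucc) * ξ 2
  + (∑ k, conj (R j k + R k j) * η k.castSucc) * ξ 2 ^ 2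
  + (∑ i, S i j * ξ i.castSucc) * ξ 2 * η 2
  + (∑ i, ∑ k, ∑ l, (T i k j l + T i k l j) * ξ i.castSucc * ξ k.castSucc * η l.castSucc)
  + (∑ k, conj (B1 j k + B1 k j) * η k.castSucc) * η 2 * ξ 2
  + conj (B2 j) * η 2 ^ 2 * ξ 2 + conj (B3 j) * η 2 * ξ 2 ^ 2

/-- Derivative of the polarization in the variable `η_2`. -/
noncomputable def Dw (ξ η : Fin 3 → ℂ) : ℂ :=
  (ξ 0 ^ 2 + m * ξ 1 ^ 2) + (∑ i, A1 i * ξ i.castSucc) * ξ 2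
  + (∑ i, conj (A1 i) * η i.castSucc) * ξ 2
  + A2 * ξ 2 ^ 2 + 2 * conj A2 * η 2 * ξ 2
  + (∑ i, ∑ j, ∑ l, P i j l * ξ i.castSucc * ξ j.castSucc * η l.castSucc)
  + (∑ i, ∑ j, ∑ l, Q i j l * ξ i.castSucc * ξ j.castSucc * ξ l.castSucc)
  + 2 * (∑ i, ∑ j, R i j * ξ i.castSucc * ξ j.castSucc) * η 2
  + (∑ i, ∑ j, S i j * ξ i.castSucc * η j.castSucc) * ξ 2
  + (∑ i, ∑ j, B1 i j * ξ i.castSucc * ξ j.castSucc) * ξ 2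
  + (∑ i, ∑ j, conj (B1 i j) * η i.castSucc * η j.castSucc) * ξ 2
  + (∑ i, B2 i * ξ i.castSucc) * ξ 2 ^ 2
  + 2 * (∑ i, conj (B2 i) * η i.castSucc) * η 2 * ξ 2
  + 2 * (∑ i, B3 i * ξ i.castSucc) * ξ 2 * η 2
  + (∑ i, conj (B3 i) * η i.castSucc) * ξ 2 ^ 2

/-- Quadratic part of the upper left block. -/
noncomputable def Xzz (i j : Fin 2) (ξ η : Fin 3 → ℂ) : ℂ :=
  (∑ k, (P i k j + P k i j) * ξ k.castSucc) * η 2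
  + (∑ k, conj (P j k i + P k j i) * η k.castSucc) * ξ 2
  + S i j * ξ 2 * η 2
  + ∑ k, ∑ l, (T i k j l + T k i j l + T i k l j + T k i l j) * ξ k.castSucc * η l.castSucc

/-- Linear part of the last column. -/
noncomputable def Lzw (i : Fin 2) (ξ : Fin 3 → ℂ) : ℂ :=
  2 * (![1, m] i) * ξ i.castSucc + A1 i * ξ 2

/-- Quadratic part of the last column. -/
noncomputable def Xzw (i : Fin 2) (ξ η : Fin 3 → ℂ) : ℂ :=
  (∑ k, ∑ l, (P i k l + P k i l) * ξ k.castSucc * η l.castSucc)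
  + (∑ k, ∑ l, (Q i k l + Q k i l + Q k l i) * ξ k.castSucc * ξ l.castSucc)
  + 2 * (∑ k, (R i k + R k i) * ξ k.castSucc) * η 2
  + (∑ l, S i l * η l.castSucc) * ξ 2
  + (∑ k, (B1 i k + B1 k i) * ξ k.castSucc) * ξ 2
  + B2 i * ξ 2 ^ 2 + 2 * B3 i * ξ 2 * η 2

/-- Linear part of the last row. -/
noncomputable def Lwz (j : Fin 2) (η : Fin 3 → ℂ) : ℂ :=
  2 * conj (![1, m] j) * η j.castSucc + conj (A1 j) * η 2

/-- Quadratic part of the last row. -/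
noncomputable def Xwz (j : Fin 2) (ξ η : Fin 3 → ℂ) : ℂ :=
  (∑ k, ∑ l, conj (P j k l + P k j l) * η k.castSucc * ξ l.castSucc)
  + (∑ k, ∑ l, conj (Q j k l + Q k j l + Q k l j) * η k.castSucc * η l.castSucc)
  + 2 * (∑ k, conj (R j k + R k j) * η k.castSucc) * ξ 2
  + (∑ i, S i j * ξ i.castSucc) * η 2
  + (∑ k, conj (B1 j k + B1 k j) * η k.castSucc) * η 2
  + conj (B2 j) * η 2 ^ 2 + 2 * conj (B3 j) * η 2 * ξ 2

/-- Linear part of the corner entry. -/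
noncomputable def Lww (ξ η : Fin 3 → ℂ) : ℂ :=
  (∑ i, A1 i * ξ i.castSucc) + (∑ i, conj (A1 i) * η i.castSucc)
  + 2 * A2 * ξ 2 + 2 * conj A2 * η 2

/-- Quadratic part of the corner entry. -/
noncomputable def Xww (ξ η : Fin 3 → ℂ) : ℂ :=
  (∑ i, ∑ j, S i j * ξ i.castSucc * η j.castSucc)
  + (∑ i, ∑ j, B1 i j * ξ i.castSucc * ξ j.castSucc)
  + (∑ i, ∑ j, conj (B1 i j) * η i.castSucc * η j.castSucc)
  + 2 * (∑ i, B2 i * ξ i.castSucc) * ξ 2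
  + 2 * (∑ i, conj (B2 i) * η i.castSucc) * η 2
  + 2 * (∑ i, B3 i * ξ i.castSucc) * η 2
  + 2 * (∑ i, conj (B3 i) * η i.castSucc) * ξ 2

set_option maxHeartbeats 4000000 in
theorem hDz0 (ξ η : Fin 3 → ℂ) :
    HasDerivAt (fun s : ℂ => (Fc m A1 A2 P Q R S T B1 B2 B3 ξ (Function.update η 0 s))) (Dz m A1 P Q R S T B1 B2 B3 0 ξ η) (η 0) := by
  simp [Fc, Dz, Fin.sum_univ_two, Function.update_apply, Fin.castSucc_zero, Fin.castSucc_one]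
  apply HasDerivAt.congr_deriv
  · repeat' first
      | exact hasDerivAt_const _ _
      | exact hasDerivAt_id' _
      | with_reducible apply HasDerivAt.fun_add
      | with_reducible apply HasDerivAt.fun_pow
      | with_reducible apply HasDerivAt.fun_mul
  · norm_num
    try ring

set_option maxHeartbeats 4000000 in
theorem hDz1 (ξ η : Fin 3 → ℂ) :
    HasDerivAt (fun s : ℂ => (Fc m A1 A2 P Q R S T B1 B2 B3 ξ (Function.update η 1 s))) (Dz m A1 P Q R S T B1 B2 B3 1 ξ η) (η 1) := by
  simp [Fc, Dz, Fin.sum_univ_two, Function.update_apply, Fin.castSucc_zero, Fin.castSucc_one]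
  apply HasDerivAt.congr_deriv
  · repeat' first
      | exact hasDerivAt_const _ _
      | exact hasDerivAt_id' _
      | with_reducible apply HasDerivAt.fun_add
      | with_reducible apply HasDerivAt.fun_pow
      | with_reducible apply HasDerivAt.fun_mul
  · norm_num
    try ring

set_option maxHeartbeats 4000000 in
theorem hDw (ξ η : Fin 3 → ℂ) :
    HasDerivAt (fun s : ℂ => (Fc m A1 A2 P Q R S T B1 B2 B3 ξ (Function.update η 2 s))) (Dw m A1 A2 P Q R S B1 B2 B3 ξ η) (η 2) := by
  simp [Fc, Dw, Fin.sum_univ_two, Function.update_apply, Fin.castSucc_zero, Fin.castSucc_one]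
  apply HasDerivAt.congr_deriv
  · repeat' first
      | exact hasDerivAt_const _ _
      | exact hasDerivAt_id' _
      | with_reducible apply HasDerivAt.fun_add
      | with_reducible apply HasDerivAt.fun_pow
      | with_reducible apply HasDerivAt.fun_mul
  · norm_num
    try ring

set_option maxHeartbeats 4000000 in
theorem hG00 (ξ η : Fin 3 → ℂ) :
    HasDerivAt (fun s : ℂ => (Dz m A1 P Q R S T B1 B2 B3 0 (Function.update ξ 0 s) η)) (Xzz P S T 0 0 ξ η) (ξ 0) := by
  simp [Dz, Xzz, Fin.sum_univ_two, Function.update_apply, Fin.castSucc_zero, Fin.castSucc_one]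
  apply HasDerivAt.congr_deriv
  · repeat' first
      | exact hasDerivAt_const _ _
      | exact hasDerivAt_id' _
      | with_reducible apply HasDerivAt.fun_add
      | with_reducible apply HasDerivAt.fun_pow
      | with_reducible apply HasDerivAt.fun_mul
  · norm_num
    try ring

set_option maxHeartbeats 4000000 in
theorem hG10 (ξ η : Fin 3 → ℂ) :
    HasDerivAt (fun s : ℂ => (Dz m A1 P Q R S T B1 B2 B3 0 (Function.update ξ 1 s) η)) (1 + Xzz P S T 1 0 ξ η) (ξ 1) := by
  simp [Dz, Xzz, Fin.sum_univ_two, Function.update_apply, Fin.castSucc_zero, Fin.castSucc_one]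
  apply HasDerivAt.congr_deriv
  · repeat' first
      | exact hasDerivAt_const _ _
      | exact hasDerivAt_id' _
      | with_reducible apply HasDerivAt.fun_add
      | with_reducible apply HasDerivAt.fun_pow
      | with_reducible apply HasDerivAt.fun_mul
  · norm_num
    try ring

set_option maxHeartbeats 4000000 in
theorem hG20 (ξ η : Fin 3 → ℂ) :
    HasDerivAt (fun s : ℂ => (Dz m A1 P Q R S T B1 B2 B3 0 (Function.update ξ 2 s) η)) (Lwz m A1 0 η + Xwz P Q R S B1 B2 B3 0 ξ η) (ξ 2) := by
  simp [Dz, Xwz, Lwz, Fin.sum_univ_two, Function.update_apply, Fin.castSucc_zero, Fin.castSucc_one]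
  apply HasDerivAt.congr_deriv
  · repeat' first
      | exact hasDerivAt_const _ _
      | exact hasDerivAt_id' _
      | with_reducible apply HasDerivAt.fun_add
      | with_reducible apply HasDerivAt.fun_pow
      | with_reducible apply HasDerivAt.fun_mul
  · norm_num
    try ring

set_option maxHeartbeats 4000000 in
theorem hG01 (ξ η : Fin 3 → ℂ) :
    HasDerivAt (fun s : ℂ => (Dz m A1 P Q R S T B1 B2 B3 1 (Function.update ξ 0 s) η)) (1 + Xzz P S T 0 1 ξ η) (ξ 0) := by
  simp [Dz, Xzz, Fin.sum_univ_two, Function.update_apply, Fin.castSucc_zero, Fin.castSucc_one]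
  apply HasDerivAt.congr_deriv
  · repeat' first
      | exact hasDerivAt_const _ _
      | exact hasDerivAt_id' _
      | with_reducible apply HasDerivAt.fun_add
      | with_reducible apply HasDerivAt.fun_pow
      | with_reducible apply HasDerivAt.fun_mul
  · norm_num
    try ring

set_option maxHeartbeats 4000000 in
theorem hG11 (ξ η : Fin 3 → ℂ) :
    HasDerivAt (fun s : ℂ => (Dz m A1 P Q R S T B1 B2 B3 1 (Function.update ξ 1 s) η)) (Xzz P S T 1 1 ξ η) (ξ 1) := by
  simp [Dz, Xzz, Fin.sum_univ_two, Function.update_apply, Fin.castSucc_zero, Fin.castSucc_one]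
  apply HasDerivAt.congr_deriv
  · repeat' first
      | exact hasDerivAt_const _ _
      | exact hasDerivAt_id' _
      | with_reducible apply HasDerivAt.fun_add
      | with_reducible apply HasDerivAt.fun_pow
      | with_reducible apply HasDerivAt.fun_mul
  · norm_num
    try ring

set_option maxHeartbeats 4000000 in
theorem hG21 (ξ η : Fin 3 → ℂ) :
    HasDerivAt (fun s : ℂ => (Dz m A1 P Q R S T B1 B2 B3 1 (Function.update ξ 2 s) η)) (Lwz m A1 1 η + Xwz P Q R S B1 B2 B3 1 ξ η) (ξ 2) := by
  simp [Dz, Xwz, Lwz, Fin.sum_univ_two, Function.update_apply, Fin.castSucc_zero, Fin.castSucc_one]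
  apply HasDerivAt.congr_deriv
  · repeat' first
      | exact hasDerivAt_const _ _
      | exact hasDerivAt_id' _
      | with_reducible apply HasDerivAt.fun_add
      | with_reducible apply HasDerivAt.fun_pow
      | with_reducible apply HasDerivAt.fun_mul
  · norm_num
    try ring

set_option maxHeartbeats 4000000 in
theorem hG02 (ξ η : Fin 3 → ℂ) :
    HasDerivAt (fun s : ℂ => (Dw m A1 A2 P Q R S B1 B2 B3 (Function.update ξ 0 s) η)) (Lzw m A1 0 ξ + Xzw P Q R S B1 B2 B3 0 ξ η) (ξ 0) := by
  simp [Dw, Xzw, Lzw, Fin.sum_univ_two, Function.update_apply, Fin.castSucc_zero, Fin.castSucc_one]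
  apply HasDerivAt.congr_deriv
  · repeat' first
      | exact hasDerivAt_const _ _
      | exact hasDerivAt_id' _
      | with_reducible apply HasDerivAt.fun_add
      | with_reducible apply HasDerivAt.fun_pow
      | with_reducible apply HasDerivAt.fun_mul
  · norm_num
    try ring

set_option maxHeartbeats 4000000 in
theorem hG12 (ξ η : Fin 3 → ℂ) :
    HasDerivAt (fun s : ℂ => (Dw m A1 A2 P Q R S B1 B2 B3 (Function.update ξ 1 s) η)) (Lzw m A1 1 ξ + Xzw P Q R S B1 B2 B3 1 ξ η) (ξ 1) := by
  simp [Dw, Xzw, Lzw, Fin.sum_univ_two, Function.update_apply, Fin.castSucc_zero, Fin.castSucc_one]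
  apply HasDerivAt.congr_deriv
  · repeat' first
      | exact hasDerivAt_const _ _
      | exact hasDerivAt_id' _
      | with_reducible apply HasDerivAt.fun_add
      | with_reducible apply HasDerivAt.fun_pow
      | with_reducible apply HasDerivAt.fun_mul
  · norm_num
    try ring

set_option maxHeartbeats 4000000 in
theorem hG22 (ξ η : Fin 3 → ℂ) :
    HasDerivAt (fun s : ℂ => (Dw m A1 A2 P Q R S B1 B2 B3 (Function.update ξ 2 s) η)) (Lww A1 A2 ξ η + Xww S B1 B2 B3 ξ η) (ξ 2) := by
  simp [Dw, Xww, Lww, Fin.sum_univ_two, Function.update_apply, Fin.castSucc_zero, Fin.castSucc_one]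
  apply HasDerivAt.congr_deriv
  · repeat' first
      | exact hasDerivAt_const _ _
      | exact hasDerivAt_id' _
      | with_reducible apply HasDerivAt.fun_add
      | with_reducible apply HasDerivAt.fun_pow
      | with_reducible apply HasDerivAt.fun_mul
  · norm_num
    try ring

end Helpers

theorem limit_coeffs (f : ℝ → ℂ) (α β : ℂ) (g : ℝ → ℂ) (hg : Continuous g)
    (hf : ∀ t : ℝ, f t = α * t + β * (t : ℂ) ^ 2 + (t : ℂ) ^ 3 * g t)
    (h : Tendsto (fun t : ℝ => f t / (t : ℂ) ^ 2) (𝓝[≠] (0 : ℝ)) (𝓝 0)) :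
    α = 0 ∧ β = 0 := by
  have hne : ∀ᶠ t : ℝ in 𝓝[≠] (0 : ℝ), (t : ℂ) ≠ 0 := by
    filter_upwards [self_mem_nhdsWithin] with t ht
    exact_mod_cast ht
  have ht0 : Tendsto (fun t : ℝ => (t : ℂ)) (𝓝[≠] (0 : ℝ)) (𝓝 0) := by
    have : Continuous (fun t : ℝ => (t : ℂ)) := by fun_prop
    simpa using (this.tendsto 0).mono_left nhdsWithin_le_nhds
  have hα : α = 0 := by
    have h1 : Tendsto (fun t : ℝ => (t : ℂ) * (f t / (t : ℂ) ^ 2)) (𝓝[≠] (0 : ℝ)) (𝓝 0) := by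
      simpa using ht0.mul h
    have hc : Continuous (fun t : ℝ => α + β * (t : ℂ) + (t : ℂ) ^ 2 * g t) := by fun_prop
    have h2 : Tendsto (fun t : ℝ => α + β * (t : ℂ) + (t : ℂ) ^ 2 * g t)
        (𝓝[≠] (0 : ℝ)) (𝓝 α) := by
      simpa using (hc.tendsto 0).mono_left nhdsWithin_le_nhds
    refine tendsto_nhds_unique (h2.congr' ?_) h1
    filter_upwards [hne] with t ht
    rw [hf]
    field_simp
  refine ⟨hα, ?_⟩
  have hc : Continuous (fun t : ℝ => β + (t : ℂ) * g t) := by fun_prop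
  have h2 : Tendsto (fun t : ℝ => β + (t : ℂ) * g t) (𝓝[≠] (0 : ℝ)) (𝓝 β) := by
    simpa using (hc.tendsto 0).mono_left nhdsWithin_le_nhds
  refine tendsto_nhds_unique (h2.congr' ?_) h
  filter_upwards [hne] with t ht
  rw [hf, hα]
  field_simp
  ring

theorem det_limit (M : ℝ → Matrix (Fin 3) (Fin 3) ℂ)
    (x11 x12 x13 x21 x22 x23 x31 x32 x33 y1 y2 v1 v2 y : ℂ)
    (h00 : ∀ t : ℝ, M t 0 0 = (t : ℂ) ^ 2 * x11)
    (h01 : ∀ t : ℝ, M t 0 1 = 1 + (t : ℂ) ^ 2 * x12)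
    (h02 : ∀ t : ℝ, M t 0 2 = t * y1 + (t : ℂ) ^ 2 * x13)
    (h10 : ∀ t : ℝ, M t 1 0 = 1 + (t : ℂ) ^ 2 * x21)
    (h11 : ∀ t : ℝ, M t 1 1 = (t : ℂ) ^ 2 * x22)
    (h12 : ∀ t : ℝ, M t 1 2 = t * y2 + (t : ℂ) ^ 2 * x23)
    (h20 : ∀ t : ℝ, M t 2 0 = t * v1 + (t : ℂ) ^ 2 * x31)
    (h21 : ∀ t : ℝ, M t 2 1 = t * v2 + (t : ℂ) ^ 2 * x32)
    (h22 : ∀ t : ℝ, M t 2 2 = t * y + (t : ℂ) ^ 2 * x33)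
    (h : Tendsto (fun t : ℝ => (M t).det / (t : ℂ) ^ 2) (𝓝[≠] (0 : ℝ)) (𝓝 0)) :
    y = 0 ∧ x33 = y2 * v1 + y1 * v2 := by
  have := limit_coeffs (fun t => (M t).det) (-y) (y2 * v1 + y1 * v2 - x33)
    (fun t => x11 * ((t : ℂ) ^ 2 * x22 * (y + t * x33) - t * (y2 + t * x23) * (v2 + t * x32))
      - (y + t * x33) * (x12 + x21 + (t : ℂ) ^ 2 * x12 * x21)
      + t * x12 * (y2 + t * x23) * (v1 + t * x31)
      + (y2 * x31 + x23 * v1 + t * x23 * x31) + (y1 * x32 + x13 * v2 + t * x13 * x32)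
      + t * (y1 + t * x13) * (x21 * (v2 + t * x32) - x22 * (v1 + t * x31)))
    (by fun_prop)
    (fun t => by
      simp only [Matrix.det_fin_three, h00, h01, h02, h10, h11, h12, h20, h21, h22]
      ring) h
  exact ⟨neg_eq_zero.mp this.1, (sub_eq_zero.mp this.2).symm⟩

theorem wirtHess_eq (F : (Fin 3 → ℂ) → (Fin 3 → ℂ) → ℂ) (D : (Fin 3 → ℂ) → (Fin 3 → ℂ) → ℂ)
    (G : (Fin 3 → ℂ) → (Fin 3 → ℂ) → ℂ) (i j : Fin 3)
    (hD : ∀ ξ η, HasDerivAt (fun s : ℂ => F ξ (Function.update η j s)) (D ξ η) (η j))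
    (hG : ∀ ξ η, HasDerivAt (fun s : ℂ => D (Function.update ξ i s) η) (G ξ η) (ξ i))
    (p : Fin 3 → ℂ) :
    wirtHess F p i j = G p (fun l => conj (p l)) := by
  have h1 : ∀ ξ, deriv (fun s : ℂ => F ξ (Function.update (fun l => conj (p l)) j s))
      (conj (p j)) = D ξ (fun l => conj (p l)) :=
    fun ξ => (hD ξ (fun l => conj (p l))).deriv
  simp only [wirtHess, Matrix.of_apply, h1]
  exact (hG p (fun l => conj (p l))).deriv

/-- Lemma 8 (null-pair case): if every homogeneous Taylor component of degree ≤ 2 of the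
determinant of the complex Hessian of `F` vanishes at `0`, then `A₁ = A₂ = B₁ = B₂ = B₃ = 0`
and `S(z, z̄) = 4 (m̄ z₁ z̄₂ + m z₂ z̄₁)`. -/
theorem stmt_2 (m : ℂ)
    (A1 : Fin 2 → ℂ) (A2 : ℂ)
    (P Q : Fin 2 → Fin 2 → Fin 2 → ℂ) (R : Fin 2 → Fin 2 → ℂ)
    (S : Matrix (Fin 2) (Fin 2) ℂ) (hS : S.conjTranspose = S)
    (T : Fin 2 → Fin 2 → Fin 2 → Fin 2 → ℂ)
    (hT : ∀ i j l o, conj (T i j l o) = T l o i j)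
    (B1 : Fin 2 → Fin 2 → ℂ) (B2 B3 : Fin 2 → ℂ)
    (hdeg : ∀ p : Fin 3 → ℂ,
      Tendsto (fun t : ℝ =>
          (wirtHess (Fc m A1 A2 P Q R S T B1 B2 B3) (t • p)).det / (t : ℂ) ^ 2)
        (𝓝[≠] (0 : ℝ)) (𝓝 0)) :
    (∀ z : Fin 2 → ℂ, ∑ i, A1 i * z i = 0) ∧
    A2 = 0 ∧
    (∀ z : Fin 2 → ℂ, ∑ i, ∑ j, B1 i j * z i * z j = 0) ∧
    (∀ z : Fin 2 → ℂ, ∑ i, B2 i * z i = 0) ∧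
    (∀ z : Fin 2 → ℂ, ∑ i, B3 i * z i = 0) ∧
    (∀ z : Fin 2 → ℂ, ∑ i, ∑ j, S i j * z i * conj (z j)
        = 4 * (conj m * z 0 * conj (z 1) + m * z 1 * conj (z 0))) := by
  have key : ∀ p : Fin 3 → ℂ, Lww A1 A2 p (fun l => conj (p l)) = 0 ∧
      Xww S B1 B2 B3 p (fun l => conj (p l)) =
        Lzw m A1 1 p * Lwz m A1 0 (fun l => conj (p l))
        + Lzw m A1 0 p * Lwz m A1 1 (fun l => conj (p l)) := by
    intro p
    set q : Fin 3 → ℂ := fun l => conj (p l) with hq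
    have d0 := hDz0 m A1 A2 P Q R S T B1 B2 B3
    have d1 := hDz1 m A1 A2 P Q R S T B1 B2 B3
    have d2 := hDw m A1 A2 P Q R S T B1 B2 B3
    refine det_limit (fun t : ℝ => wirtHess (Fc m A1 A2 P Q R S T B1 B2 B3) (t • p))
      (Xzz P S T 0 0 p q) (Xzz P S T 0 1 p q) (Xzw P Q R S B1 B2 B3 0 p q)
      (Xzz P S T 1 0 p q) (Xzz P S T 1 1 p q) (Xzw P Q R S B1 B2 B3 1 p q)
      (Xwz P Q R S B1 B2 B3 0 p q) (Xwz P Q R S B1 B2 B3 1 p q) (Xww S B1 B2 B3 p q)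
      (Lzw m A1 0 p) (Lzw m A1 1 p) (Lwz m A1 0 q) (Lwz m A1 1 q) (Lww A1 A2 p q)
      ?_ ?_ ?_ ?_ ?_ ?_ ?_ ?_ ?_ (hdeg p)
    · intro t
      refine (wirtHess_eq _ _ _ 0 0 d0 (hG00 m A1 P Q R S T B1 B2 B3) _).trans ?_
      simp [Xzz, hq, Fin.sum_univ_two]; ring
    · intro t
      refine (wirtHess_eq _ _ _ 0 1 d1 (hG01 m A1 P Q R S T B1 B2 B3) _).trans ?_
      simp [Xzz, hq, Fin.sum_univ_two]; ring
    · intro t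
      refine (wirtHess_eq _ _ _ 0 2 d2 (hG02 m A1 A2 P Q R S B1 B2 B3) _).trans ?_
      simp [Xzw, Lzw, hq, Fin.sum_univ_two]; ring
    · intro t
      refine (wirtHess_eq _ _ _ 1 0 d0 (hG10 m A1 P Q R S T B1 B2 B3) _).trans ?_
      simp [Xzz, hq, Fin.sum_univ_two]; ring
    · intro t
      refine (wirtHess_eq _ _ _ 1 1 d1 (hG11 m A1 P Q R S T B1 B2 B3) _).trans ?_
      simp [Xzz, hq, Fin.sum_univ_two]; ring
    · intro t
      refine (wirtHess_eq _ _ _ 1 2 d2 (hG12 m A1 A2 P Q R S B1 B2 B3) _).trans ?_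
      simp [Xzw, Lzw, hq, Fin.sum_univ_two]; ring
    · intro t
      refine (wirtHess_eq _ _ _ 2 0 d0 (hG20 m A1 P Q R S T B1 B2 B3) _).trans ?_
      simp [Xwz, Lwz, hq, Fin.sum_univ_two]; ring
    · intro t
      refine (wirtHess_eq _ _ _ 2 1 d1 (hG21 m A1 P Q R S T B1 B2 B3) _).trans ?_
      simp [Xwz, Lwz, hq, Fin.sum_univ_two]; ring
    · intro t
      refine (wirtHess_eq _ _ _ 2 2 d2 (hG22 m A1 A2 P Q R S B1 B2 B3) _).trans ?_
      simp [Xww, Lww, hq, Fin.sum_univ_two]; ring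
  have hI : (I : ℂ) * I = -1 := I_mul_I
  -- degree one
  have lin : ∀ a b c : ℂ, A1 0 * a + A1 1 * b + (conj (A1 0) * conj a + conj (A1 1) * conj b)
      + 2 * A2 * c + 2 * conj A2 * conj c = 0 := by
    intro a b c
    simpa [Lww, Fin.sum_univ_two] using (key ![a, b, c]).1
  have half : ∀ u v : ℂ, u + v = 0 → u * I - v * I = 0 → u = 0 := by
    intro u v h1 h2
    linear_combination (1 / 2) * h1 - (I / 2) * h2 + (u - v) / 2 * hI
  have hA0 : A1 0 = 0 := by
    refine half _ (conj (A1 0)) ?_ ?_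
    · simpa using lin 1 0 0
    · have := lin I 0 0
      simp at this
      linear_combination this
  have hA1 : A1 1 = 0 := by
    refine half _ (conj (A1 1)) ?_ ?_
    · simpa using lin 0 1 0
    · have := lin 0 I 0
      simp at this
      linear_combination this
  have hA2 : A2 = 0 := by
    refine half _ (conj A2) ?_ ?_
    · have := lin 0 0 1
      simp at this
      linear_combination this / 2
    · have := lin 0 0 I
      simp at this
      linear_combination this / 2
  -- degree two
  have quad : ∀ a b c : ℂ,
      (S 0 0 * a * conj a + S 0 1 * a * conj b + (S 1 0 * b * conj a + S 1 1 * b * conj b))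
      + (B1 0 0 * a * a + B1 0 1 * a * b + (B1 1 0 * b * a + B1 1 1 * b * b))
      + (conj (B1 0 0) * conj a * conj a + conj (B1 0 1) * conj a * conj b
        + (conj (B1 1 0) * conj b * conj a + conj (B1 1 1) * conj b * conj b))
      + 2 * (B2 0 * a + B2 1 * b) * c
      + 2 * (conj (B2 0) * conj a + conj (B2 1) * conj b) * conj c
      + 2 * (B3 0 * a + B3 1 * b) * conj c
      + 2 * (conj (B3 0) * conj a + conj (B3 1) * conj b) * c
      = 2 * m * b * (2 * conj a) + 2 * a * (2 * conj m * conj b) := by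
    intro a b c
    simpa [Xww, Lzw, Lwz, hA0, hA1, Fin.sum_univ_two] using (key ![a, b, c]).2
  have sq : ∀ a b : ℂ,
      (S 0 0 * a * conj a + S 0 1 * a * conj b + (S 1 0 * b * conj a + S 1 1 * b * conj b))
        = 4 * (conj m * a * conj b + m * b * conj a) ∧
      B1 0 0 * a * a + B1 0 1 * a * b + (B1 1 0 * b * a + B1 1 1 * b * b) = 0 := by
    intro a b
    have e1 := quad a b 0
    have e2 := quad (I * a) (I * b) 0
    have e3 := quad ((1 + I) * a) ((1 + I) * b) 0
    simp only [map_mul, map_add, map_one, conj_I, map_zero, mul_zero, add_zero] at e1 e2 e3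
    generalize conj a = a' at *
    generalize conj b = b' at *
    have hs : (S 0 0 * a * a' + S 0 1 * a * b' + (S 1 0 * b * a' + S 1 1 * b * b'))
        = 4 * (conj m * a * b' + m * b * a') := by
      have hI2 : (I : ℂ) ^ 2 = -1 := I_sq
      ring_nf at e2
      simp only [hI2] at e2
      linear_combination e1 / 2 + e2 / 2
    refine ⟨hs, half _ (conj (B1 0 0) * a' * a' + conj (B1 0 1) * a' * b'
        + (conj (B1 1 0) * b' * a' + conj (B1 1 1) * b' * b')) ?_ ?_⟩
    · linear_combination e1 - hs
    · have hI2 : (I : ℂ) ^ 2 = -1 := I_sq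
      ring_nf at e3
      simp only [hI2] at e3
      linear_combination e3 / 2 - hs
  have mix : ∀ a b : ℂ, B2 0 * a + B2 1 * b = 0 ∧ B3 0 * a + B3 1 * b = 0 := by
    intro a b
    have red : ∀ a b c : ℂ, (B2 0 * a + B2 1 * b) * c
        + (conj (B2 0) * conj a + conj (B2 1) * conj b) * conj c
        + (B3 0 * a + B3 1 * b) * conj c
        + (conj (B3 0) * conj a + conj (B3 1) * conj b) * c = 0 := by
      intro a b c
      have e0 := quad a b 0
      simp only [map_zero, mul_zero, add_zero] at e0
      linear_combination (quad a b c - e0) / 2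
    have e1 := red a b 1
    have e2 := red a b I
    have e3 := red (I * a) (I * b) 1
    have e4 := red (I * a) (I * b) I
    simp only [map_mul, map_one, conj_I] at e1 e2 e3 e4
    generalize conj a = a' at *
    generalize conj b = b' at *
    constructor
    · refine half _ (conj (B2 0) * a' + conj (B2 1) * b') ?_ ?_
      · linear_combination e1 / 2 - e4 / 2 + (B2 0 * a + B2 1 * b + conj (B2 0) * a' + conj (B2 1) * b' - (B3 0 * a + B3 1 * b) - (conj (B3 0) * a' + conj (B3 1) * b')) / 2 * hI
      · linear_combination e2 / 2 + e3 / 2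
    · refine half _ (conj (B3 0) * a' + conj (B3 1) * b') ?_ ?_
      · linear_combination e1 / 2 + e4 / 2 - (B2 0 * a + B2 1 * b + conj (B2 0) * a' + conj (B2 1) * b' - (B3 0 * a + B3 1 * b) - (conj (B3 0) * a' + conj (B3 1) * b')) / 2 * hI
      · linear_combination e3 / 2 - e2 / 2
  refine ⟨?_, hA2, ?_, ?_, ?_, ?_⟩
  · intro z
    simp [Fin.sum_univ_two, hA0, hA1]
  · intro z
    simpa [Fin.sum_univ_two] using (sq (z 0) (z 1)).2
  · intro z
    simpa [Fin.sum_univ_two] using (mix (z 0) (z 1)).1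
  · intro z
    simpa [Fin.sum_univ_two] using (mix (z 0) (z 1)).2
  · intro z
    simpa [Fin.sum_univ_two] using (sq (z 0) (z 1)).1
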